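/- For n ≥ 2 and x ∈ ℝⁿ \ {0}, and any continuous function φ : ℝ → ℝ, the Funk–Hecke identity holds: ∫_{S^{n-1}} φ(x·θ) dS(θ) = |S^{n-2}| · |x|^{2-n} ∫_{-|x|}^{|x|} (|x|² - t²)^{(n-3)/2} φ(t) dt. -/

import Mathlib

open MeasureTheory
open scoped RealInnerProductSpace

/-!
Integrate `f (⟪x, y⟫ / ‖y‖) * g ‖y‖` over a Euclidean space `E` in two ways. Polar coordinates
in `E` give the integral of `f ⟪x, θ⟫` over the unit sphere times a radial moment of `g`.
Splitting `E` isometrically as `ℝ × F` with `dim E = dim F + 1` and `x` along the first factor,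
the integrand depends only on the height `t` and the norm of the `F`-component; polar
coordinates in `F`, and then in the half-plane of pairs `(t, ‖z‖)`, give
`|S(F)| * ∫ sin a ^ (dim F - 1) * f (‖x‖ * cos a)` times the same moment. After cancelling the
moment and substituting `t = ‖x‖ * cos a`, this is the density of the image of the surface
measure under `θ ↦ ⟪x, θ⟫`. Working with `ℝ≥0∞`-valued functions up to that point leaves no
integrability to check, although the density is unbounded near `±‖x‖` when `dim E = 2`.
-/

section FunkHecke

open Measure Metric Module Set
open scoped ENNReal

theorem lintegral_volumeIoiPow (n : ℕ) (f : ℝ → ℝ≥0∞) :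
    ∫⁻ s, f s ∂(volumeIoiPow n) = ∫⁻ s in Ioi 0, .ofReal (s ^ n) * f s := by
  rw [volumeIoiPow, lintegral_withDensity_eq_lintegral_mul_non_measurable _ (by fun_prop)
    (.of_forall fun _ ↦ ENNReal.ofReal_lt_top)]
  exact lintegral_subtype_comap measurableSet_Ioi fun s ↦ .ofReal (s ^ n) * f s

section NormedSpace

variable {E : Type*} [NormedAddCommGroup E] [NormedSpace ℝ E] [FiniteDimensional ℝ E]
  [Nontrivial E] [MeasurableSpace E] [BorelSpace E] (μ : Measure E) [μ.IsAddHaarMeasure]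

theorem lintegral_inv_norm_smul_mul_norm {f : E → ℝ≥0∞} (hf : Measurable f) {g : ℝ → ℝ≥0∞}
    (hg : Measurable g) :
    ∫⁻ y, f (‖y‖⁻¹ • y) * g ‖y‖ ∂μ = (∫⁻ θ : sphere (0 : E) 1, f θ ∂μ.toSphere) *
      ∫⁻ s in Ioi 0, .ofReal (s ^ (finrank ℝ E - 1)) * g s := by
  calc
    ∫⁻ y, f (‖y‖⁻¹ • y) * g ‖y‖ ∂μ
      = ∫⁻ y : ({0}ᶜ : Set E), f (‖(y : E)‖⁻¹ • (y : E)) * g ‖(y : E)‖ ∂(μ.comap (↑)) := by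
      rw [lintegral_subtype_comap (measurableSet_singleton 0).compl
        fun y : E ↦ f (‖y‖⁻¹ • y) * g ‖y‖, restrict_compl_singleton]
    _ = ∫⁻ p : sphere (0 : E) 1 × Ioi (0 : ℝ), f p.1 * g p.2
          ∂(μ.toSphere.prod (volumeIoiPow (finrank ℝ E - 1))) := by
      rw [← μ.measurePreserving_homeomorphUnitSphereProd.lintegral_comp_emb
        (Homeomorph.measurableEmbedding _)]
      simp
    _ = _ := by
      rw [← lintegral_volumeIoiPow]
      exact lintegral_prod_mul (hf.comp measurable_subtype_coe).aemeasurable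
        (hg.comp measurable_subtype_coe).aemeasurable

theorem lintegral_fun_norm_addHaar {f : ℝ → ℝ≥0∞} (hf : Measurable f) :
    ∫⁻ y, f ‖y‖ ∂μ =
      μ.toSphere univ * ∫⁻ s in Ioi 0, .ofReal (s ^ (finrank ℝ E - 1)) * f s := by
  simpa using lintegral_inv_norm_smul_mul_norm μ (measurable_const (a := 1)) hf

end NormedSpace

theorem setLIntegral_upperHalfPlane_eq_polarCoord (f : ℝ × ℝ → ℝ≥0∞) :
    ∫⁻ p in univ ×ˢ Ioi 0, f p =
      ∫⁻ p in Ioi 0 ×ˢ Ioo 0 Real.pi, .ofReal p.1 * f (polarCoord.symm p) := by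
  have h_meas : MeasurableSet ((univ : Set ℝ) ×ˢ Ioi (0 : ℝ)) := .prod .univ measurableSet_Ioi
  have h_meas' : MeasurableSet (Ioi (0 : ℝ) ×ˢ Ioo 0 Real.pi) :=
    measurableSet_Ioi.prod measurableSet_Ioo
  have h_subset : Ioi (0 : ℝ) ×ˢ Ioo 0 Real.pi ⊆ polarCoord.target :=
    prod_mono_right (Ioo_subset_Ioo_left (neg_nonpos.2 Real.pi_nonneg))
  have h_mem {p : ℝ × ℝ} (hp : p ∈ polarCoord.target) :
      polarCoord.symm p ∈ (univ : Set ℝ) ×ˢ Ioi 0 ↔ p ∈ Ioi (0 : ℝ) ×ˢ Ioo 0 Real.pi := by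
    obtain ⟨hr : 0 < p.1, ha⟩ := hp
    have h_sin : 0 < Real.sin p.2 ↔ 0 < p.2 :=
      ⟨fun h ↦ by
        by_contra! h'
        exact h.not_ge (Real.sin_nonpos_of_nonpos_of_neg_pi_le h' ha.1.le),
        fun h ↦ Real.sin_pos_of_pos_of_lt_pi h ha.2⟩
    simp [hr, ha.2, h_sin]
  rw [← lintegral_indicator h_meas, ← lintegral_comp_polarCoord_symm,
    ← inter_eq_left.2 h_subset, ← setLIntegral_indicator h_meas']
  refine setLIntegral_congr_fun polarCoord.open_target.measurableSet fun p hp ↦ ?_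
  simp only [indicator, h_mem hp, smul_eq_mul, mul_ite, mul_zero]

theorem setLIntegral_Ioo_rpow_sq_sub_sq_mul {r : ℝ} (hr : 0 < r) (p : ℝ) (f : ℝ → ℝ≥0∞) :
    ∫⁻ t in Ioo (-r) r, .ofReal ((r ^ 2 - t ^ 2) ^ p) * f t =
      .ofReal (r ^ (2 * p + 1)) *
        ∫⁻ a in Ioo 0 Real.pi, .ofReal (Real.sin a ^ (2 * p + 1)) * f (r * Real.cos a) := by
  have h_image : (fun a ↦ r * Real.cos a) '' Ioo 0 Real.pi = Ioo (-r) r := by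
    have h_cos : Real.cos '' Ioo 0 Real.pi = Ioo (-1) 1 :=
      Real.cosPartialHomeomorph.image_source_eq_target
    rw [← image_image (r * ·), h_cos, image_mul_left_Ioo hr, mul_neg, mul_one]
  have h_inj : InjOn (fun a ↦ r * Real.cos a) (Ioo 0 Real.pi) :=
    (mul_right_injective₀ hr.ne').comp_injOn (Real.injOn_cos.mono Ioo_subset_Icc_self)
  rw [← h_image, lintegral_image_eq_lintegral_abs_deriv_mul measurableSet_Ioo
      (fun a _ ↦ ((Real.hasDerivAt_cos a).const_mul r).hasDerivWithinAt) h_inj,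
    ← lintegral_const_mul' _ _ ENNReal.ofReal_ne_top]
  refine setLIntegral_congr_fun measurableSet_Ioo fun a ha ↦ ?_
  have h_sin : 0 < Real.sin a := Real.sin_pos_of_mem_Ioo ha
  have h_jacobian : |r * -Real.sin a| * (r ^ 2 - (r * Real.cos a) ^ 2) ^ p =
      r ^ (2 * p + 1) * Real.sin a ^ (2 * p + 1) := by
    have h_sq : r ^ 2 - (r * Real.cos a) ^ 2 = (r * Real.sin a) ^ 2 := by
      linear_combination -r ^ 2 * Real.cos_sq_add_sin_sq a
    have hrs : 0 < r * Real.sin a := mul_pos hr h_sin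
    rw [mul_neg, abs_neg, abs_of_pos hrs, h_sq, ← Real.rpow_natCast_mul hrs.le,
      ← Real.mul_rpow hr.le h_sin.le, Real.rpow_add_one hrs.ne', mul_comm, Nat.cast_ofNat]
  simp only [← mul_assoc, ← ENNReal.ofReal_mul (abs_nonneg _), h_jacobian,
    ← ENNReal.ofReal_mul (Real.rpow_nonneg hr.le _)]

section InnerProductSpace

variable {E F : Type*}
  [NormedAddCommGroup E] [InnerProductSpace ℝ E] [FiniteDimensional ℝ E]
  [NormedAddCommGroup F] [InnerProductSpace ℝ F] [FiniteDimensional ℝ F]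

theorem exists_linearIsometryEquiv_apply_eq (h : finrank ℝ E = finrank ℝ F) {x : E} {y : F}
    (hxy : ‖x‖ = ‖y‖) : ∃ e : E ≃ₗᵢ[ℝ] F, e x = y := by
  let e : E ≃ₗᵢ[ℝ] F := (stdOrthonormalBasis ℝ E).equiv (stdOrthonormalBasis ℝ F) (finCongr h)
  exact ⟨e.trans (Submodule.reflection (ℝ ∙ (e x - y))ᗮ),
    Submodule.reflection_sub ((e.norm_map x).trans hxy)⟩

variable [MeasurableSpace E] [BorelSpace E] [MeasurableSpace F] [BorelSpace F]

theorem lintegral_inner_norm_eq_lintegral_prod (h : finrank ℝ E = finrank ℝ F + 1) (x : E)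
    (f : ℝ → ℝ → ℝ≥0∞) :
    ∫⁻ y : E, f ⟪x, y⟫ ‖y‖ =
      ∫⁻ p : ℝ × F, f (‖x‖ * p.1) √(p.1 ^ 2 + ‖p.2‖ ^ 2) := by
  have h_finrank : finrank ℝ E = finrank ℝ (WithLp 2 (ℝ × F)) := by
    rw [(WithLp.linearEquiv 2 ℝ (ℝ × F)).finrank_eq, finrank_prod, finrank_self, h, add_comm]
  obtain ⟨e, he⟩ : ∃ e : E ≃ₗᵢ[ℝ] WithLp 2 (ℝ × F), e x = WithLp.toLp 2 (‖x‖, 0) :=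
    exists_linearIsometryEquiv_apply_eq h_finrank (by simp)
  rw [← ((WithLp.volume_preserving_ofLp ℝ F).comp e.measurePreserving).lintegral_comp_emb
    ((MeasurableEquiv.toLp 2 (ℝ × F)).symm.measurableEmbedding.comp
      e.toHomeomorph.measurableEmbedding)]
  refine lintegral_congr fun y ↦ ?_
  have h_inner : ⟪x, y⟫ = ‖x‖ * (e y).fst := by
    rw [← e.inner_map_map, he, WithLp.prod_inner_apply]
    simp [mul_comm]
  have h_norm : ‖y‖ = √((e y).fst ^ 2 + ‖(e y).snd‖ ^ 2) := by
    rw [← e.norm_map, WithLp.prod_norm_eq_of_L2, Real.norm_eq_abs, sq_abs]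
  rw [h_inner, h_norm]
  rfl

theorem lintegral_inner_norm_eq_polarCoord [Nontrivial F]
    (h : finrank ℝ E = finrank ℝ F + 1) (x : E) {f : ℝ → ℝ → ℝ≥0∞} (hf : Measurable f.uncurry) :
    ∫⁻ y : E, f ⟪x, y⟫ ‖y‖ = (volume : Measure F).toSphere univ *
      ∫⁻ p in Ioi 0 ×ˢ Ioo 0 Real.pi,
        .ofReal (p.1 ^ finrank ℝ F * Real.sin p.2 ^ (finrank ℝ F - 1)) *
          f (‖x‖ * (p.1 * Real.cos p.2)) p.1 := by
  have hf' : Measurable fun p : ℝ × ℝ ↦ f (‖x‖ * p.1) √(p.1 ^ 2 + p.2 ^ 2) :=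
    hf.comp (f := fun p : ℝ × ℝ ↦ (‖x‖ * p.1, √(p.1 ^ 2 + p.2 ^ 2))) (by fun_prop)
  calc
    ∫⁻ y : E, f ⟪x, y⟫ ‖y‖
      = ∫⁻ t : ℝ, ∫⁻ z : F, f (‖x‖ * t) √(t ^ 2 + ‖z‖ ^ 2) := by
      rw [lintegral_inner_norm_eq_lintegral_prod h, volume_eq_prod]
      exact lintegral_prod _
        (hf'.comp (f := fun p : ℝ × F ↦ (p.1, ‖p.2‖)) (by fun_prop)).aemeasurable
    _ = ∫⁻ t : ℝ, (volume : Measure F).toSphere univ * ∫⁻ s in Ioi 0,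
          .ofReal (s ^ (finrank ℝ F - 1)) * f (‖x‖ * t) √(t ^ 2 + s ^ 2) :=
      lintegral_congr fun t ↦ lintegral_fun_norm_addHaar volume
        (f := fun s ↦ f (‖x‖ * t) √(t ^ 2 + s ^ 2)) (hf'.comp measurable_prodMk_left)
    _ = (volume : Measure F).toSphere univ * ∫⁻ p in (univ : Set ℝ) ×ˢ Ioi (0 : ℝ),
          .ofReal (p.2 ^ (finrank ℝ F - 1)) * f (‖x‖ * p.1) √(p.1 ^ 2 + p.2 ^ 2) := by
      rw [lintegral_const_mul' _ _ (measure_ne_top _ _), volume_eq_prod, setLIntegral_prod,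
        setLIntegral_univ]
      exact (Measurable.mul (by fun_prop) hf').aemeasurable
    _ = _ := by
      rw [setLIntegral_upperHalfPlane_eq_polarCoord]
      congr 1
      refine setLIntegral_congr_fun (measurableSet_Ioi.prod measurableSet_Ioo) ?_
      rintro ⟨s, a⟩ ⟨hs : 0 < s, -⟩
      have h_sq : (s * Real.cos a) ^ 2 + (s * Real.sin a) ^ 2 = s ^ 2 := by
        linear_combination s ^ 2 * Real.cos_sq_add_sin_sq a
      have h_pow : s * (s * Real.sin a) ^ (finrank ℝ F - 1) =
          s ^ finrank ℝ F * Real.sin a ^ (finrank ℝ F - 1) := by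
        rw [mul_pow, ← mul_assoc, mul_pow_sub_one finrank_pos.ne']
      simp only [polarCoord_symm_apply, h_sq, Real.sqrt_sq hs.le]
      rw [← mul_assoc, ← ENNReal.ofReal_mul hs.le, h_pow]

theorem lintegral_inner_div_norm_mul_norm [Nontrivial F] (h : finrank ℝ E = finrank ℝ F + 1)
    (x : E) {f g : ℝ → ℝ≥0∞} (hf : Measurable f) (hg : Measurable g) :
    ∫⁻ y : E, f (⟪x, y⟫ / ‖y‖) * g ‖y‖ =
      ((volume : Measure F).toSphere univ * ∫⁻ a in Ioo 0 Real.pi,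
        .ofReal (Real.sin a ^ (finrank ℝ F - 1)) * f (‖x‖ * Real.cos a)) *
          ∫⁻ s in Ioi 0, .ofReal (s ^ finrank ℝ F) * g s := by
  have h_meas : Measurable (Function.uncurry fun u s ↦ f (u / s) * g s) :=
    (hf.comp (measurable_fst.div measurable_snd)).mul (hg.comp measurable_snd)
  rw [lintegral_inner_norm_eq_polarCoord h x h_meas, mul_assoc, mul_comm (∫⁻ _ in Ioo _ _, _),
    ← lintegral_prod_mul (by fun_prop) (by fun_prop), prod_restrict, ← volume_eq_prod]
  congr 1
  refine setLIntegral_congr_fun (measurableSet_Ioi.prod measurableSet_Ioo) ?_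
  rintro ⟨s, a⟩ ⟨hs : 0 < s, -⟩
  have h_quot : ‖x‖ * (s * Real.cos a) / s = ‖x‖ * Real.cos a := by field_simp
  simp only [h_quot, ENNReal.ofReal_mul (pow_nonneg hs.le _)]
  ring

theorem lintegral_toSphere_inner [Nontrivial F] (h : finrank ℝ E = finrank ℝ F + 1) (x : E)
    {f : ℝ → ℝ≥0∞} (hf : Measurable f) :
    ∫⁻ θ : sphere (0 : E) 1, f ⟪x, θ⟫ ∂volume.toSphere = (volume : Measure F).toSphere univ *
      ∫⁻ a in Ioo 0 Real.pi, .ofReal (Real.sin a ^ (finrank ℝ F - 1)) * f (‖x‖ * Real.cos a) := by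
  have : Nontrivial E := nontrivial_of_finrank_pos (R := ℝ) (by omega)
  -- The unit ball as radial cutoff: any weight with a nonzero finite moment would do.
  let χ : ℝ → ℝ≥0∞ := (Iio 1).indicator 1
  have hχ : Measurable χ := measurable_one.indicator measurableSet_Iio
  let c : ℝ≥0∞ := ∫⁻ s in Ioi 0, .ofReal (s ^ finrank ℝ F) * χ s
  have hc : c = .ofReal (1 / (finrank ℝ F + 1)) := calc
    c = volumeIoiPow (finrank ℝ F) (Iio ⟨1, mem_Ioi.2 one_pos⟩) := by
      rw [← lintegral_indicator_one measurableSet_Iio]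
      exact (lintegral_volumeIoiPow _ χ).symm
    _ = _ := by rw [volumeIoiPow_apply_Iio, one_pow]
  have hc_ne_zero : c ≠ 0 := by
    rw [hc, ENNReal.ofReal_ne_zero_iff]
    positivity
  have hc_ne_top : c ≠ ∞ := hc ▸ ENNReal.ofReal_ne_top
  rw [← ENNReal.mul_left_inj hc_ne_zero hc_ne_top, ← lintegral_inner_div_norm_mul_norm h x hf hχ]
  have h_polar := lintegral_inv_norm_smul_mul_norm (volume : Measure E) (f := fun y ↦ f ⟪x, y⟫)
    (hf.comp (by fun_prop)) hχ
  simpa [c, h, inner_smul_right, div_eq_inv_mul] using h_polar.symm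

theorem map_inner_toSphere [Nontrivial F] (h : finrank ℝ E = finrank ℝ F + 1) {x : E}
    (hx : x ≠ 0) :
    (volume.toSphere).map (fun θ : sphere (0 : E) 1 ↦ ⟪x, θ⟫) =
      ((volume : Measure F).toSphere univ * .ofReal (‖x‖ ^ (2 - finrank ℝ E : ℝ))) •
        (volume.restrict (Ioo (-‖x‖) ‖x‖)).withDensity
          fun t ↦ .ofReal ((‖x‖ ^ 2 - t ^ 2) ^ ((finrank ℝ E - 3 : ℝ) / 2)) := by
  have h_inner : Measurable fun θ : sphere (0 : E) 1 ↦ ⟪x, θ⟫ := by fun_prop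
  have hr : 0 < ‖x‖ := norm_pos_iff.2 hx
  have h_exp : 2 * ((finrank ℝ E - 3 : ℝ) / 2) + 1 = (finrank ℝ F - 1 : ℕ) := by
    rw [h, Nat.cast_pred finrank_pos]
    push_cast
    ring
  have h_pow : ‖x‖ ^ (2 - finrank ℝ E : ℝ) * ‖x‖ ^ (finrank ℝ F - 1) = 1 := by
    rw [← Real.rpow_natCast, ← h_exp, ← Real.rpow_add hr]
    convert Real.rpow_zero ‖x‖ using 2
    ring
  refine ext_of_lintegral _ fun f hf ↦ ?_
  rw [lintegral_map hf h_inner, lintegral_toSphere_inner h x hf, lintegral_smul_measure,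
    lintegral_withDensity_eq_lintegral_mul _ (by fun_prop) hf]
  simp only [Pi.mul_apply]
  rw [setLIntegral_Ioo_rpow_sq_sub_sq_mul hr, h_exp, smul_eq_mul, mul_assoc,
    ← mul_assoc (ENNReal.ofReal _), ← ENNReal.ofReal_mul (by positivity)]
  simp only [Real.rpow_natCast, h_pow, ENNReal.ofReal_one, one_mul]

theorem stmt8_general {G : Type*} [NormedAddCommGroup G] [NormedSpace ℝ G] [Nontrivial F]
    (h : finrank ℝ E = finrank ℝ F + 1) {x : E} (hx : x ≠ 0) {φ : ℝ → G}
    (hφ : AEStronglyMeasurable φ (volume.restrict (Ioo (-‖x‖) ‖x‖))) :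
    ∫ θ : sphere (0 : E) 1, φ ⟪x, θ⟫ ∂volume.toSphere =
      (((volume : Measure F).toSphere univ).toReal * ‖x‖ ^ (2 - finrank ℝ E : ℝ)) •
        ∫ t in -‖x‖..‖x‖, (‖x‖ ^ 2 - t ^ 2) ^ ((finrank ℝ E - 3 : ℝ) / 2) • φ t := by
  have h_weight : ∀ t ∈ Ioo (-‖x‖) ‖x‖, 0 ≤ ‖x‖ ^ 2 - t ^ 2 := fun t ht ↦
    sub_nonneg.2 (sq_le_sq' ht.1.le ht.2.le)
  have h_ac : (volume.toSphere).map (fun θ : sphere (0 : E) 1 ↦ ⟪x, θ⟫) ≪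
      volume.restrict (Ioo (-‖x‖) ‖x‖) := by
    rw [map_inner_toSphere (F := F) h hx]
    exact (withDensity_absolutelyContinuous _ _).smul_left _
  rw [← integral_map (by fun_prop) (hφ.mono_ac h_ac), map_inner_toSphere (F := F) h hx,
    integral_smul_measure, ENNReal.toReal_mul, ENNReal.toReal_ofReal (by positivity),
    integral_withDensity_eq_integral_toReal_smul (by fun_prop)
      (.of_forall fun _ ↦ ENNReal.ofReal_lt_top),
    intervalIntegral.integral_of_le (neg_le_self (norm_nonneg x)), integral_Ioc_eq_integral_Ioo]
  congr 1
  refine setIntegral_congr_fun measurableSet_Ioo fun t ht ↦ ?_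
  simp only [ENNReal.toReal_ofReal (Real.rpow_nonneg (h_weight t ht) _)]

end InnerProductSpace

end FunkHecke

/-- Funk–Hecke identity: for `n ≥ 2`, `x ∈ ℝⁿ \ {0}` and continuous `φ : ℝ → ℝ`,
`∫_{S^{n-1}} φ(x·θ) dS(θ) = |S^{n-2}| |x|^{2-n} ∫_{-|x|}^{|x|} (|x|²-t²)^{(n-3)/2} φ(t) dt`,
with `|S^{n-2}|` the surface measure of the unit sphere in `ℝ^{n-1}`. -/
theorem stmt8 (n : ℕ) (hn : 2 ≤ n) (x : EuclideanSpace ℝ (Fin n)) (hx : x ≠ 0)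
    (φ : ℝ → ℝ) (hφ : Continuous φ) :
    (∫ θ : Metric.sphere (0 : EuclideanSpace ℝ (Fin n)) 1,
        φ ⟪x, (θ : EuclideanSpace ℝ (Fin n))⟫ ∂(volume.toSphere))
    = (((volume : Measure (EuclideanSpace ℝ (Fin (n - 1)))).toSphere Set.univ).toReal) *
        ‖x‖ ^ ((2 : ℝ) - n) *
        ∫ t in (-‖x‖)..(‖x‖), (‖x‖ ^ 2 - t ^ 2) ^ (((n : ℝ) - 3) / 2) * φ t := by
  have : Nonempty (Fin (n - 1)) := ⟨⟨0, by omega⟩⟩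
  simpa using stmt8_general (F := EuclideanSpace ℝ (Fin (n - 1)))
    (by simp only [finrank_euclideanSpace_fin]; omega) hx hφ.aestronglyMeasurable
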